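/- arXiv:1304.5932 — 3 statements merged into one kernel-verified Lean document; each statement's English description precedes it below -/
import Mathlib

section
/- Let τ be the unique positive real with τ·Ω''(τ) = 1, Λ := Ψ(τ), γ := 1 + τ²·Ω'''(τ), ρ := τ·e^{−Ω'(τ)}. Let T(z) be the solution of T = z·e^{Ω'(T)} with T(0) = 0, analytic on [0, ρ), with T(z) → τ as z → ρ⁻, and set U := T + Ω(T) − T·Ω'(T). Then, as z → ρ from the left along the reals: (τ − T(z))/√(1 − z/ρ) → τ·√(2/γ); (1 − T(z)·Ω''(T(z)))^{−1/2}·(1 − z/ρ)^{1/4} → (2γ)^{−1/4}; and (U(z) − τ(1 − Λ) + τ·(1 − z/ρ))/(1 − z/ρ)^{3/2} → (2τ/3)·√(2/γ). -/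
open Filter

/-- `Ω(z) = ∑_{t≥2} ω_t z^t / t!`. -/
noncomputable def Om (ω : ℕ → ℝ) (z : ℝ) : ℝ := ∑' t : ℕ, ω t * z ^ t / t.factorial

/-- `Ψ(z) = Ω'(z) − Ω(z)/z`. -/
noncomputable def Psi (ω : ℕ → ℝ) (z : ℝ) : ℝ := deriv (Om ω) z - Om ω z / z


lemma om_summable {ω : ℕ → ℝ} {C : ℝ} (hC : ∀ t, |ω t| ≤ C) (z : ℝ) :
    Summable (fun t : ℕ => ω t * z ^ t / t.factorial) := by
  refine Summable.of_norm_bounded (g := fun t : ℕ => C * (|z| ^ t / t.factorial))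
    ((Real.summable_pow_div_factorial |z|).mul_left C) (fun t => ?_)
  rw [Real.norm_eq_abs, mul_div_assoc, abs_mul, abs_div, abs_pow, Nat.abs_cast]
  exact mul_le_mul_of_nonneg_right (hC t) (by positivity)

lemma om_hasDerivAt {ω : ℕ → ℝ} {C : ℝ} (hC : ∀ t, |ω t| ≤ C) (z : ℝ) :
    HasDerivAt (Om ω) (Om (fun t => ω (t + 1)) z) z := by
  set R := |z| + 1 with hR
  have hRpos : 0 < R := by positivity
  have key := hasDerivAt_tsum_of_isPreconnected
    (u := fun n : ℕ => C * (n * R ^ (n - 1) / n.factorial))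
    (g := fun (n : ℕ) (y : ℝ) => ω n * y ^ n / n.factorial)
    (g' := fun (n : ℕ) (y : ℝ) => ω n * (n * y ^ (n - 1)) / n.factorial)
    (t := Metric.ball (0 : ℝ) R) (y₀ := 0) (y := z) ?_ Metric.isOpen_ball
    (convex_ball _ _).isPreconnected ?_ ?_ (by simpa using hRpos) (om_summable hC 0)
    (by simp [hR])
  · refine HasDerivAt.congr_deriv (f := Om ω) key ?_
    unfold Om
    have hs := om_summable hC z
    rw [Summable.tsum_eq_zero_add]
    · simp only [Nat.cast_zero, zero_mul, mul_zero, zero_div, zero_add]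
      refine tsum_congr fun n => ?_
      have : (n.factorial : ℝ) ≠ 0 := by positivity
      simp only [Nat.add_sub_cancel, Nat.factorial_succ]
      push_cast
      have : (n : ℝ) + 1 ≠ 0 := by positivity
      field_simp
    · rw [← summable_nat_add_iff 1]
      refine (om_summable (ω := fun t => ω (t + 1)) (fun t => hC _) z).congr fun n => ?_
      have : (n.factorial : ℝ) ≠ 0 := by positivity
      simp only [Nat.add_sub_cancel, Nat.factorial_succ]
      push_cast
      have : (n : ℝ) + 1 ≠ 0 := by positivity
      field_simp
  · refine Summable.mul_left C ?_
    rw [← summable_nat_add_iff 1]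
    refine (Real.summable_pow_div_factorial R).congr fun n => ?_
    have : (n.factorial : ℝ) ≠ 0 := by positivity
    simp only [Nat.add_sub_cancel, Nat.factorial_succ]
    push_cast
    have : (n : ℝ) + 1 ≠ 0 := by positivity
    field_simp
  · intro n y _
    exact ((hasDerivAt_pow n y).const_mul (ω n)).div_const _
  · intro n y hy
    have hy' : |y| ≤ R := by
      have := Metric.mem_ball.1 hy
      simp at this
      exact this.le
    rw [Real.norm_eq_abs, mul_div_assoc, abs_mul, abs_div, abs_mul, abs_pow, Nat.abs_cast,
      Nat.abs_cast]
    refine mul_le_mul (hC n) ?_ (by positivity) ((abs_nonneg _).trans (hC n))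
    gcongr

lemma om_deriv {ω : ℕ → ℝ} {C : ℝ} (hC : ∀ t, |ω t| ≤ C) :
    deriv (Om ω) = Om (fun t => ω (t + 1)) :=
  funext fun z => (om_hasDerivAt hC z).deriv

/-- Analytic core: everything in the variable `t = T z`. -/
lemma core_limits (F F1 F2 : ℝ → ℝ) (c τ γ ρ : ℝ)
    (hF : ∀ x, HasDerivAt F (F1 x) x) (hF1 : ∀ x, HasDerivAt F1 (F2 x) x)
    (hF2 : HasDerivAt F2 c τ) (hτpos : 0 < τ) (hτ : τ * F2 τ = 1)
    (hγ : γ = 1 + τ ^ 2 * c) (hρ : ρ = τ * Real.exp (-F1 τ)) :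
    Tendsto (fun t => (1 - t * F2 t) / (τ - t)) (nhdsWithin τ (Set.Iio τ)) (nhds (γ / τ)) ∧
    Tendsto (fun t => (1 - t * Real.exp (-F1 t) / ρ) / (τ - t) ^ 2)
      (nhdsWithin τ (Set.Iio τ)) (nhds (γ / (2 * τ ^ 2))) ∧
    Tendsto (fun t => (t + F t - t * F1 t - (τ + F τ - τ * F1 τ)
        + τ * (1 - t * Real.exp (-F1 t) / ρ)) / (τ - t) ^ 3)
      (nhdsWithin τ (Set.Iio τ)) (nhds (γ / (3 * τ ^ 2))) := by
  have hρpos : 0 < ρ := by rw [hρ]; positivity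
  have hlt : ∀ᶠ t in nhdsWithin τ (Set.Iio τ), t < τ := eventually_mem_nhdsWithin
  have hle : nhdsWithin τ (Set.Iio τ) ≤ nhdsWithin τ {τ}ᶜ :=
    nhdsWithin_mono _ fun x hx => ne_of_lt hx
  have hle' : nhdsWithin τ (Set.Iio τ) ≤ nhds τ := nhdsWithin_le_nhds
  have hE : ∀ t, HasDerivAt (fun t => t * Real.exp (-F1 t))
      ((1 - t * F2 t) * Real.exp (-F1 t)) t := by
    intro t
    refine ((hasDerivAt_id t).mul ((hF1 t).neg.exp)).congr_deriv ?_
    simp only [id, Pi.neg_apply]; ring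
  have hP : ∀ t, HasDerivAt (fun t => 1 - t * Real.exp (-F1 t) / ρ)
      (-((1 - t * F2 t) * Real.exp (-F1 t) / ρ)) t := by
    intro t
    exact ((hE t).div_const ρ).const_sub 1
  have hN : ∀ t, HasDerivAt (fun t => t + F t - t * F1 t - (τ + F τ - τ * F1 τ)
        + τ * (1 - t * Real.exp (-F1 t) / ρ))
      ((1 - t * F2 t) * (1 - τ / ρ * Real.exp (-F1 t))) t := by
    intro t
    refine ((((hasDerivAt_id t).add (hF t)).sub ((hasDerivAt_id t).mul (hF1 t))).sub_const
      (τ + F τ - τ * F1 τ)).add ((hP t).const_mul τ) |>.congr_deriv ?_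
    simp only [id]; field_simp; ring
  have hPτ : 1 - τ * Real.exp (-F1 τ) / ρ = 0 := by
    rw [← hρ, div_self hρpos.ne', sub_self]
  have hF2τ : F2 τ = 1 / τ := by field_simp; linarith
  have hdq : ∀ t, HasDerivAt (fun t => τ - t) (-1) t := fun t =>
    (hasDerivAt_id t).const_sub τ
  have a1 : Tendsto (fun t => (1 - t * F2 t) / (τ - t)) (nhdsWithin τ (Set.Iio τ))
      (nhds (γ / τ)) := by
    have h := (hasDerivAt_iff_tendsto_slope.1 ((hasDerivAt_id τ).mul hF2)).mono_left hle
    have e : (1 * F2 τ + id τ * c) = γ / τ := by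
      rw [hγ, hF2τ]; simp only [id]; field_simp
    rw [e] at h
    refine h.congr' ?_
    filter_upwards [hlt] with t ht
    have h1 : τ - t ≠ 0 := by linarith [ht]
    have h2 : t - τ ≠ 0 := by intro h; apply h1; linarith
    rw [slope_def_field]
    simp only [Pi.mul_apply, id, hτ]
    rw [div_eq_div_iff h2 h1]; ring
  have hexp : Tendsto (fun t => Real.exp (-F1 t)) (nhdsWithin τ (Set.Iio τ))
      (nhds (Real.exp (-F1 τ))) :=
    ((hF1 τ).continuousAt.neg.rexp.tendsto).mono_left hle'
  have a3 : Tendsto (fun t => (1 - τ / ρ * Real.exp (-F1 t)) / (τ - t))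
      (nhdsWithin τ (Set.Iio τ)) (nhds (-(1 / τ))) := by
    have h := (hasDerivAt_iff_tendsto_slope.1
      ((hF1 τ).neg.exp.const_mul (τ / ρ))).mono_left hle
    have e : τ / ρ * (Real.exp (-F1 τ) * -F2 τ) = -(1 / τ) := by
      rw [hF2τ, hρ]; field_simp
    have e2 : τ / ρ * Real.exp (-F1 τ) = 1 := by
      rw [hρ]; field_simp
    simp only [Pi.neg_apply] at h
    rw [e] at h
    refine h.congr' ?_
    filter_upwards [hlt] with t ht
    have h1 : τ - t ≠ 0 := by linarith [ht]
    have h2 : t - τ ≠ 0 := by intro h; apply h1; linarith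
    rw [slope_def_field]
    simp only [e2]
    rw [div_eq_div_iff h2 h1]; ring
  have ltop : ∀ n : ℕ, n ≠ 0 → Tendsto (fun t => (τ - t) ^ n) (nhdsWithin τ (Set.Iio τ)) (nhds 0) := by
    intro n hn
    have : Continuous fun t : ℝ => (τ - t) ^ n := by fun_prop
    simpa [hn] using (this.tendsto τ).mono_left hle'
  refine ⟨a1, ?_, ?_⟩
  · refine HasDerivAt.lhopital_zero_nhdsLT (f' := fun t => -((1 - t * F2 t) * Real.exp (-F1 t) / ρ))
      (g' := fun t => 2 * (τ - t) * (-1)) (Eventually.of_forall hP)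
      (Eventually.of_forall fun t => ?_) ?_ ?_ (ltop 2 (by norm_num)) ?_
    · exact ((hdq t).fun_pow 2).congr_deriv (by simp)
    · filter_upwards [hlt] with t ht
      have : τ - t ≠ 0 := by linarith [ht]
      simpa using this
    · simpa only [hPτ] using (hP τ).continuousAt.tendsto.mono_left hle'
    · have := (a1.mul hexp).div_const (2 * ρ)
      have e : γ / τ * Real.exp (-F1 τ) / (2 * ρ) = γ / (2 * τ ^ 2) := by
        rw [hρ]; field_simp
      rw [e] at this
      refine this.congr' ?_
      filter_upwards [hlt] with t ht
      have : τ - t ≠ 0 := by linarith [ht]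
      field_simp
  · refine HasDerivAt.lhopital_zero_nhdsLT
      (f' := fun t => (1 - t * F2 t) * (1 - τ / ρ * Real.exp (-F1 t)))
      (g' := fun t => 3 * (τ - t) ^ 2 * (-1)) (Eventually.of_forall hN)
      (Eventually.of_forall fun t => ?_) ?_ ?_ (ltop 3 (by norm_num)) ?_
    · exact ((hdq t).fun_pow 3).congr_deriv (by simp)
    · filter_upwards [hlt] with t ht
      have : τ - t ≠ 0 := by linarith [ht]
      simpa using this
    · simpa only [hPτ, sub_self, mul_zero, add_zero] using
        (hN τ).continuousAt.tendsto.mono_left hle'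
    · have := ((a1.mul a3).div_const 3).neg
      have e : -(γ / τ * -(1 / τ) / 3) = γ / (3 * τ ^ 2) := by
        field_simp
      rw [e] at this
      refine this.congr' ?_
      filter_upwards [hlt] with t ht
      have : τ - t ≠ 0 := by linarith [ht]
      field_simp

theorem stmt11 (ω : ℕ → ℝ)
    (hnonneg : ∀ t, 0 ≤ ω t) (hbdd : ∃ C, ∀ t, ω t ≤ C)
    (h0 : ω 0 = 0) (h1 : ω 1 = 0) (hnz : ∃ t, ω t ≠ 0)
    (τ : ℝ) (hτpos : 0 < τ) (hτ : τ * deriv (deriv (Om ω)) τ = 1)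
    (Λ γ ρ : ℝ) (hΛ : Λ = Psi ω τ)
    (hγ : γ = 1 + τ ^ 2 * iteratedDeriv 3 (Om ω) τ)
    (hρ : ρ = τ * Real.exp (-deriv (Om ω) τ))
    (T : ℝ → ℝ) (hT0 : T 0 = 0)
    (hTanal : AnalyticOnNhd ℝ T (Set.Ico 0 ρ))
    (hTeq : ∀ z ∈ Set.Ico 0 ρ, T z = z * Real.exp (deriv (Om ω) (T z)))
    (hTlim : Tendsto T (nhdsWithin ρ (Set.Iio ρ)) (nhds τ))
    (U : ℝ → ℝ)
    (hU : ∀ z, U z = T z + Om ω (T z) - T z * deriv (Om ω) (T z)) :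
    Tendsto (fun z => (τ - T z) / Real.sqrt (1 - z / ρ))
      (nhdsWithin ρ (Set.Iio ρ)) (nhds (τ * Real.sqrt (2 / γ))) ∧
    Tendsto (fun z =>
        (1 - T z * deriv (deriv (Om ω)) (T z)) ^ (-(1 : ℝ) / 2) *
          (1 - z / ρ) ^ ((1 : ℝ) / 4))
      (nhdsWithin ρ (Set.Iio ρ)) (nhds ((2 * γ) ^ (-(1 : ℝ) / 4))) ∧
    Tendsto (fun z =>
        (U z - τ * (1 - Λ) + τ * (1 - z / ρ)) / (1 - z / ρ) ^ ((3 : ℝ) / 2))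
      (nhdsWithin ρ (Set.Iio ρ)) (nhds (2 * τ / 3 * Real.sqrt (2 / γ))) := by
  obtain ⟨C, hC⟩ := hbdd
  have hC' : ∀ t, |ω t| ≤ C := fun t => by rw [abs_of_nonneg (hnonneg t)]; exact hC t
  have d1 : deriv (Om ω) = Om (fun t => ω (t + 1)) := om_deriv hC'
  have d2 : deriv (Om (fun t => ω (t + 1))) = Om (fun t => ω (t + 1 + 1)) :=
    om_deriv (ω := fun t => ω (t + 1)) fun t => hC' _
  have d3 : deriv (Om (fun t => ω (t + 1 + 1))) = Om (fun t => ω (t + 1 + 1 + 1)) :=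
    om_deriv (ω := fun t => ω (t + 1 + 1)) fun t => hC' _
  have d3' : iteratedDeriv 3 (Om ω) τ = Om (fun t => ω (t + 1 + 1 + 1)) τ := by
    rw [iteratedDeriv_succ, iteratedDeriv_succ, iteratedDeriv_one, d1, d2, d3]
  rw [d3'] at hγ
  simp only [d1, d2] at hτ hρ hTeq hU ⊢
  have hc : 0 ≤ Om (fun t => ω (t + 1 + 1 + 1)) τ :=
    tsum_nonneg fun t => by have := hnonneg (t + 1 + 1 + 1); positivity
  have hFd := om_hasDerivAt hC'
  have hF1d := om_hasDerivAt (ω := fun t => ω (t + 1)) fun t => hC' _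
  have hF2d := om_hasDerivAt (ω := fun t => ω (t + 1 + 1)) (fun t => hC' _) τ
  have hPsi : τ * (1 - Λ) = τ + Om ω τ - τ * Om (fun t => ω (t + 1)) τ := by
    rw [hΛ, Psi, d1]; field_simp; ring
  clear hΛ d1 d2 d3 d3'
  obtain ⟨A, B, D⟩ := core_limits (Om ω) _ _ _ τ γ ρ hFd hF1d hF2d hτpos hτ hγ hρ
  generalize Om (fun t => ω (t + 1 + 1 + 1)) τ = c at *
  generalize Om (fun t => ω (t + 1 + 1)) = F2 at *
  generalize Om (fun t => ω (t + 1)) = F1 at *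
  have hρpos : 0 < ρ := by rw [hρ]; positivity
  have hγpos : 0 < γ := by rw [hγ]; positivity
  -- `T` stays below `τ` by the intermediate value theorem
  have hTlt : ∀ z ∈ Set.Ico 0 ρ, T z < τ := by
    intro z hz
    by_contra hcon
    have hcon' : τ ≤ T z := not_lt.1 hcon
    have hcont : ContinuousOn T (Set.Icc 0 z) :=
      hTanal.continuousOn.mono fun x hx => ⟨hx.1, lt_of_le_of_lt hx.2 hz.2⟩
    obtain ⟨w, hw, hwτ⟩ := intermediate_value_Icc hz.1 hcont
      (show τ ∈ Set.Icc (T 0) (T z) from ⟨by rw [hT0]; exact hτpos.le, hcon'⟩)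
    have hwρ : w < ρ := lt_of_le_of_lt hw.2 hz.2
    have h := hTeq w ⟨hw.1, hwρ⟩
    rw [hwτ] at h
    have : w = ρ := by
      rw [hρ]
      nth_rewrite 1 [h]
      rw [mul_assoc, ← Real.exp_add]
      simp
    exact absurd this hwρ.ne
  have hev : ∀ᶠ z in nhdsWithin ρ (Set.Iio ρ), z ∈ Set.Ico 0 ρ := by
    filter_upwards [eventually_mem_nhdsWithin,
      mem_nhdsWithin_of_mem_nhds (Ioi_mem_nhds hρpos)] with z h1 h2
    exact ⟨le_of_lt h2, h1⟩
  have hTT : Tendsto T (nhdsWithin ρ (Set.Iio ρ)) (nhdsWithin τ (Set.Iio τ)) :=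
    tendsto_nhdsWithin_iff.2 ⟨hTlim, by filter_upwards [hev] with z hz using hTlt z hz⟩
  have hinv : ∀ z ∈ Set.Ico 0 ρ, T z * Real.exp (-F1 (T z)) = z := by
    intro z hz
    have h := hTeq z hz
    calc T z * Real.exp (-F1 (T z))
        = z * Real.exp (F1 (T z)) * Real.exp (-F1 (T z)) := by rw [← h]
      _ = z := by rw [mul_assoc, ← Real.exp_add]; simp
  have hs : ∀ z ∈ Set.Ico 0 ρ, 0 < 1 - z / ρ := by
    intro z hz
    have := (div_lt_one hρpos).2 hz.2
    linarith
  have A' := A.comp hTT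
  have B' : Tendsto (fun z => (1 - z / ρ) / (τ - T z) ^ 2)
      (nhdsWithin ρ (Set.Iio ρ)) (nhds (γ / (2 * τ ^ 2))) := by
    refine (B.comp hTT).congr' ?_
    filter_upwards [hev] with z hz
    simp only [Function.comp, hinv z hz]
  have D' : Tendsto (fun z => (U z - τ * (1 - Λ) + τ * (1 - z / ρ)) / (τ - T z) ^ 3)
      (nhdsWithin ρ (Set.Iio ρ)) (nhds (γ / (3 * τ ^ 2))) := by
    refine (D.comp hTT).congr' ?_
    filter_upwards [hev] with z hz
    simp only [Function.comp, hinv z hz, hU, hPsi]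
  have P1 : Tendsto (fun z => (τ - T z) / Real.sqrt (1 - z / ρ))
      (nhdsWithin ρ (Set.Iio ρ)) (nhds (τ * Real.sqrt (2 / γ))) := by
    have h := (B'.inv₀ (by positivity)).sqrt
    have e : Real.sqrt ((γ / (2 * τ ^ 2))⁻¹) = τ * Real.sqrt (2 / γ) := by
      rw [inv_div, mul_comm, mul_div_assoc, Real.sqrt_mul (by positivity),
        Real.sqrt_sq hτpos.le]
    rw [e] at h
    refine h.congr' ?_
    filter_upwards [hev] with z hz
    have hd : 0 < τ - T z := by linarith [hTlt z hz]
    rw [inv_div, Real.sqrt_div (by positivity), Real.sqrt_sq hd.le]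
  have hsq : Real.sqrt (2 / γ) ^ 2 = 2 / γ := Real.sq_sqrt (by positivity)
  refine ⟨P1, ?_, ?_⟩
  · have Q : Tendsto (fun z => (1 - T z * F2 (T z)) / Real.sqrt (1 - z / ρ))
        (nhdsWithin ρ (Set.Iio ρ)) (nhds (Real.sqrt (2 * γ))) := by
      have h := A'.mul P1
      have e : γ / τ * (τ * Real.sqrt (2 / γ)) = Real.sqrt (2 * γ) := by
        symm
        rw [Real.sqrt_eq_iff_mul_self_eq (by positivity) (by positivity)]
        have : γ / τ * (τ * Real.sqrt (2 / γ)) * (γ / τ * (τ * Real.sqrt (2 / γ)))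
          = γ ^ 2 * Real.sqrt (2 / γ) ^ 2 := by field_simp
        rw [this, hsq]; field_simp
      rw [e] at h
      refine h.congr' ?_
      filter_upwards [hev] with z hz
      have hd : 0 < τ - T z := by linarith [hTlt z hz]
      have := Real.sqrt_pos.2 (hs z hz)
      simp only [Function.comp]
      field_simp
    have hpos : 0 < Real.sqrt (2 * γ) := by positivity
    have h := Q.rpow_const (p := -(1 : ℝ) / 2) (Or.inl hpos.ne')
    have e : Real.sqrt (2 * γ) ^ (-(1 : ℝ) / 2) = (2 * γ) ^ (-(1 : ℝ) / 4) := by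
      rw [Real.sqrt_eq_rpow, ← Real.rpow_mul (by positivity)]
      norm_num
    rw [e] at h
    refine h.congr' ?_
    filter_upwards [hev, Q.eventually (lt_mem_nhds hpos)] with z hz hq
    have hsp := Real.sqrt_pos.2 (hs z hz)
    have hn : 0 < 1 - T z * F2 (T z) := by
      have := (div_pos_iff_of_pos_right hsp).1 hq
      exact this
    rw [Real.div_rpow hn.le hsp.le, div_eq_mul_inv, ← Real.rpow_neg hsp.le,
      Real.sqrt_eq_rpow, ← Real.rpow_mul (hs z hz).le]
    norm_num
  · have h := D'.mul (P1.pow 3)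
    have e : γ / (3 * τ ^ 2) * (τ * Real.sqrt (2 / γ)) ^ 3
        = 2 * τ / 3 * Real.sqrt (2 / γ) := by
      have : γ / (3 * τ ^ 2) * (τ * Real.sqrt (2 / γ)) ^ 3
        = γ * τ / 3 * Real.sqrt (2 / γ) ^ 2 * Real.sqrt (2 / γ) := by field_simp
      rw [this, hsq]; field_simp
    rw [e] at h
    refine h.congr' ?_
    filter_upwards [hev] with z hz
    have hd : 0 < τ - T z := by linarith [hTlt z hz]
    have hsp := Real.sqrt_pos.2 (hs z hz)
    have e3 : (1 - z / ρ) ^ ((3 : ℝ) / 2) = Real.sqrt (1 - z / ρ) ^ 3 := by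
      rw [Real.sqrt_eq_rpow, ← Real.rpow_natCast, ← Real.rpow_mul (hs z hz).le]
      norm_num
    rw [e3]
    generalize U z - τ * (1 - Λ) + τ * (1 - z / ρ) = N
    generalize Real.sqrt (1 - z / ρ) = q at *
    field_simp
end

section
/- With e_r := (6r)!/( (3!)^{2r} · 2^{3r} · (3r)! · (2r)! ), the series ∑_{r≥0} 3^{−r} · e_r · 4^r · r!/(2r)! converges and its sum equals √(3/2). Equivalently, the Gauss hypergeometric value ₂F₁(1/6, 5/6; 1/2; 1/2) equals √(3/2). -/
/-- `e_r = (6r)! / ((3!)^{2r} · 2^{3r} · (3r)! · (2r)!)`, the number of cubic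
multigraphs of excess `r` divided by `(2r)!`. -/
noncomputable def cubicE (r : ℕ) : ℝ :=
  ((6 * r).factorial : ℝ) /
    (((3).factorial : ℝ) ^ (2 * r) * 2 ^ (3 * r) *
      ((3 * r).factorial : ℝ) * ((2 * r).factorial : ℝ))

theorem aux_deriv (c : ℕ → ℝ) (hc : ∀ n, |c n| ≤ 1) (z : ℝ) (hz : |z| < 1) :
    Summable (fun n => c n * z ^ n) ∧ Summable (fun n : ℕ => c n * (n * z ^ (n - 1))) ∧
    HasDerivAt (fun z : ℝ => ∑' n, c n * z ^ n) (∑' n : ℕ, c n * (n * z ^ (n - 1))) z := by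
  obtain ⟨r, hzr, hr1⟩ := exists_between hz
  have hr0 : 0 ≤ r := (abs_nonneg z).trans hzr.le
  have hu : Summable (fun n : ℕ => (n : ℝ) * r ^ (n - 1)) := by
    rw [← summable_nat_add_iff 1]
    have h1 := summable_pow_mul_geometric_of_norm_lt_one (R := ℝ) 1
      (r := r) (by rwa [Real.norm_eq_abs, abs_of_nonneg hr0])
    have h2 := summable_geometric_of_lt_one hr0 hr1
    refine (h1.add h2).congr fun n => ?_
    simp
    ring
  have hbound : ∀ (n : ℕ) (y : ℝ), |y| < r → ‖c n * (n * y ^ (n - 1))‖ ≤ n * r ^ (n - 1) := by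
    intro n y hy
    rw [norm_mul, norm_mul, norm_pow, Real.norm_eq_abs, Real.norm_eq_abs, Real.norm_eq_abs,
      Nat.abs_cast]
    have h3 : |y| ^ (n - 1) ≤ r ^ (n - 1) := pow_le_pow_left₀ (abs_nonneg y) hy.le _
    calc |c n| * (n * |y| ^ (n - 1)) ≤ 1 * (n * |y| ^ (n - 1)) :=
          mul_le_mul_of_nonneg_right (hc n) (by positivity)
      _ ≤ n * r ^ (n - 1) := by rw [one_mul]; gcongr
  have hs : Summable (fun n => c n * z ^ n) := by
    refine Summable.of_norm_bounded (summable_geometric_of_lt_one (abs_nonneg z) hz) fun n => ?_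
    rw [norm_mul, norm_pow, Real.norm_eq_abs, Real.norm_eq_abs]
    exact mul_le_of_le_one_left (by positivity) (hc n)
  have hzb : z ∈ Metric.ball (0 : ℝ) r := by simpa using hzr
  refine ⟨hs, Summable.of_norm_bounded hu fun n => hbound n z hzr, ?_⟩
  exact hasDerivAt_tsum_of_isPreconnected hu Metric.isOpen_ball
    (convex_ball (0 : ℝ) r).isPreconnected
    (fun n y _ => (hasDerivAt_pow n y).const_mul (c n))
    (fun n y hy => hbound n y (by simpa using hy)) hzb hs hzb

noncomputable def auxA (r : ℕ) : ℝ :=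
  (Polynomial.eval (1 / 6 : ℝ) (ascPochhammer ℝ r) *
            Polynomial.eval (5 / 6 : ℝ) (ascPochhammer ℝ r) /
            Polynomial.eval (1 / 2 : ℝ) (ascPochhammer ℝ r)) / (r.factorial : ℝ)

theorem auxA_zero : auxA 0 = 1 := by simp [auxA]

theorem auxA_succ (n : ℕ) :
    auxA (n + 1) = auxA n * ((n + 1 / 6) * (n + 5 / 6) / ((n + 1 / 2) * (n + 1))) := by
  have h : 0 < Polynomial.eval (1 / 2 : ℝ) (ascPochhammer ℝ n) :=
    ascPochhammer_pos n _ (by norm_num)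
  have h2 : (n.factorial : ℝ) ≠ 0 := by positivity
  have h3 : (1 / 2 + n : ℝ) ≠ 0 := by positivity
  have h4 : (n + 1 / 2 : ℝ) ≠ 0 := by positivity
  have h5 : (n + 1 : ℝ) ≠ 0 := by positivity
  simp only [auxA, ascPochhammer_succ_eval, Nat.factorial_succ]
  push_cast
  generalize Polynomial.eval (1 / 2 : ℝ) (ascPochhammer ℝ n) = p at *
  generalize Polynomial.eval (1 / 6 : ℝ) (ascPochhammer ℝ n) = p1 at *
  generalize Polynomial.eval (5 / 6 : ℝ) (ascPochhammer ℝ n) = p2 at *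
  rw [add_comm (1 / 2 : ℝ), add_comm (1 / 6 : ℝ), add_comm (5 / 6 : ℝ)]
  rw [div_div, div_div, div_mul_div_comm]
  congr 1 <;> ring

theorem auxA_bd (n : ℕ) : 0 ≤ auxA n ∧ auxA n ≤ 1 := by
  induction n with
  | zero => simp [auxA_zero]
  | succ n ih =>
    rw [auxA_succ]
    have h : ((n + 1 / 6) * (n + 5 / 6) / ((n + 1 / 2) * (n + 1)) : ℝ) ≤ 1 := by
      rw [div_le_one (by positivity)]
      have : (0 : ℝ) ≤ n := n.cast_nonneg
      nlinarith
    refine ⟨mul_nonneg ih.1 (by positivity), mul_le_one₀ ih.2 (by positivity) h⟩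

theorem auxA_rec (n : ℕ) :
    2 * (n + 1) * auxA (n + 1) = (2 * n + 1) * auxA n - 4 / 9 * (auxA n / (2 * n + 1)) := by
  rw [auxA_succ]
  have h4 : (n + 1 / 2 : ℝ) ≠ 0 := by positivity
  have h5 : (n + 1 : ℝ) ≠ 0 := by positivity
  have h6 : (2 * n + 1 : ℝ) ≠ 0 := by positivity
  field_simp
  ring

theorem cubic_term (r : ℕ) :
    (3 : ℝ)⁻¹ ^ r * cubicE r * 4 ^ r * (r.factorial : ℝ) / ((2 * r).factorial : ℝ)
      = auxA r * (1 / 2) ^ r := by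
  induction r with
  | zero => simp [cubicE, auxA_zero]
  | succ n ih =>
    rw [auxA_succ, pow_succ (1 / 2 : ℝ)]
    have : auxA n * ((n + 1 / 6) * (n + 5 / 6) / ((n + 1 / 2) * (n + 1))) * ((1 / 2) ^ n * (1 / 2))
      = (auxA n * (1 / 2) ^ n) * ((n + 1 / 6) * (n + 5 / 6) / ((n + 1 / 2) * (n + 1)) / 2) := by ring
    rw [this, ← ih]
    unfold cubicE
    rw [show 6 * (n + 1) = 6 * n + 1 + 1 + 1 + 1 + 1 + 1 by ring,
      show 3 * (n + 1) = 3 * n + 1 + 1 + 1 by ring,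
      show 2 * (n + 1) = 2 * n + 1 + 1 by ring]
    simp only [Nat.factorial_succ (6 * n + _), Nat.factorial_succ (6 * n), Nat.factorial_succ n,
      Nat.factorial_succ (3 * n + _), Nat.factorial_succ (3 * n),
      Nat.factorial_succ (2 * n + _), Nat.factorial_succ (2 * n), pow_succ]
    have h1 : ((6 * n).factorial : ℝ) ≠ 0 := by positivity
    have h2 : ((3 * n).factorial : ℝ) ≠ 0 := by positivity
    have h3 : ((2 * n).factorial : ℝ) ≠ 0 := by positivity
    have h4 : (n.factorial : ℝ) ≠ 0 := by positivity
    have h5 : ((3 : ℕ).factorial : ℝ) = 6 := by norm_num [Nat.factorial]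
    rw [h5]
    push_cast
    field_simp
    ring

noncomputable def auxP (z : ℝ) : ℝ := ∑' n, auxA n * z ^ n
noncomputable def auxQ (z : ℝ) : ℝ := ∑' n : ℕ, (auxA n / (2 * n + 1)) * z ^ n

theorem aux_sys (z : ℝ) (hz : |z| < 1) : ∃ p q : ℝ, HasDerivAt auxP p z ∧ HasDerivAt auxQ q z ∧
    2 * (1 - z) * p - auxP z = - (4 / 9) * auxQ z ∧ auxQ z + 2 * z * q = auxP z := by
  obtain ⟨s1, s2, d1⟩ := aux_deriv auxA
    (fun n => by rw [abs_of_nonneg (auxA_bd n).1]; exact (auxA_bd n).2) z hz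
  obtain ⟨s3, s4, d2⟩ := aux_deriv (fun n => auxA n / (2 * n + 1))
    (fun n => by
      have := auxA_bd n
      have h0 : (0 : ℝ) ≤ n := n.cast_nonneg
      rw [abs_of_nonneg (div_nonneg this.1 (by positivity)), div_le_one (by positivity)]
      linarith) z hz
  have hz1 : ∀ n : ℕ, (n : ℝ) * z ^ (n - 1) * z = n * z ^ n := by
    intro n
    cases n with
    | zero => simp
    | succ n => simp [pow_succ]; ring
  refine ⟨_, _, d1, d2, ?_, ?_⟩
  · have e1 : HasSum (fun n : ℕ => auxA (n + 1) * ((n + 1) * z ^ n))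
        (∑' n : ℕ, auxA n * (n * z ^ (n - 1))) := by
      have := (hasSum_nat_add_iff' 1).mpr s2.hasSum
      simpa using this
    have e2 := s2.hasSum.mul_right z
    have e3 := ((e1.mul_left 2).sub (e2.mul_left 2)).sub s1.hasSum
    have e4 := s3.hasSum.mul_left (-(4 / 9))
    have : (fun n : ℕ => 2 * (auxA (n + 1) * ((n + 1) * z ^ n))
        - 2 * (auxA n * (n * z ^ (n - 1)) * z) - auxA n * z ^ n)
        = fun n : ℕ => -(4 / 9) * (auxA n / (2 * n + 1) * z ^ n) := by
      funext n
      linear_combination z ^ n * auxA_rec n - 2 * auxA n * hz1 n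
    rw [this] at e3
    have := e3.unique e4
    simp only [auxP, auxQ]
    linear_combination this
  · have e2 := s3.hasSum.add ((s4.hasSum.mul_right z).mul_left 2)
    have : (fun n : ℕ => auxA n / (2 * n + 1) * z ^ n +
        2 * (auxA n / (2 * n + 1) * (n * z ^ (n - 1)) * z)) = fun n : ℕ => auxA n * z ^ n := by
      funext n
      have h6 : (2 * n + 1 : ℝ) ≠ 0 := by positivity
      have h7 : auxA n / (2 * n + 1) * (2 * n + 1) = auxA n := div_mul_cancel₀ _ h6
      linear_combination 2 * (auxA n / (2 * n + 1)) * hz1 n + z ^ n * h7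
    rw [this] at e2
    have := e2.unique s1.hasSum
    simp only [auxP, auxQ]
    linear_combination this

theorem aux_val : auxP (1 / 2) = Real.sqrt (3 / 2) := by
  set u : ℝ → ℝ := fun t => auxP (Real.sin t ^ 2) * Real.cos t with hu
  set v : ℝ → ℝ := fun t => -(4 / 9) * (Real.sin t * auxQ (Real.sin t ^ 2)) with hv
  have hpi := Real.pi_pos
  have key : ∀ t ∈ Set.Icc 0 (Real.pi / 4), HasDerivAt u (v t) t ∧
      HasDerivAt v (-(4 / 9) * u t) t := by
    intro t ht
    have hc : 0 < Real.cos t := Real.cos_pos_of_mem_Ioo ⟨by linarith [ht.1], by linarith [ht.2]⟩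
    have hsc := Real.sin_sq_add_cos_sq t
    have hz : |Real.sin t ^ 2| < 1 := by
      rw [abs_of_nonneg (sq_nonneg _)]; nlinarith
    obtain ⟨p, q, hp, hq, h1, h2⟩ := aux_sys _ hz
    have hs2 : HasDerivAt (fun t => Real.sin t ^ 2) (2 * Real.sin t * Real.cos t) t := by
      simpa using (Real.hasDerivAt_sin t).fun_pow 2
    have hP : HasDerivAt (fun t => auxP (Real.sin t ^ 2)) (p * (2 * Real.sin t * Real.cos t)) t :=
      HasDerivAt.comp (h₂ := auxP) (h := fun t => Real.sin t ^ 2) t hp hs2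
    have hQ : HasDerivAt (fun t => auxQ (Real.sin t ^ 2)) (q * (2 * Real.sin t * Real.cos t)) t :=
      HasDerivAt.comp (h₂ := auxQ) (h := fun t => Real.sin t ^ 2) t hq hs2
    constructor
    · refine (hP.mul (Real.hasDerivAt_cos t)).congr_deriv ?_
      simp only [hv]
      linear_combination Real.sin t * h1 + 2 * p * Real.sin t * hsc
    · refine (((Real.hasDerivAt_sin t).mul hQ).const_mul (-(4 / 9))).congr_deriv ?_
      simp only [hu]
      linear_combination (-(4 / 9)) * Real.cos t * h2
  have hcos : ∀ t : ℝ, HasDerivAt (fun t => Real.cos (2 / 3 * t))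
      (-Real.sin (2 / 3 * t) * (2 / 3)) t := fun t => by
    simpa using ((hasDerivAt_id t).const_mul (2 / 3)).cos
  have hsin : ∀ t : ℝ, HasDerivAt (fun t => Real.sin (2 / 3 * t))
      (Real.cos (2 / 3 * t) * (2 / 3)) t := fun t => by
    simpa using ((hasDerivAt_id t).const_mul (2 / 3)).sin
  have hB : ∀ t ∈ Set.Icc 0 (Real.pi / 4), HasDerivAt
      (fun t => u t * Real.cos (2 / 3 * t) - 3 / 2 * (v t * Real.sin (2 / 3 * t))) 0 t := by
    intro t ht
    obtain ⟨k1, k2⟩ := key t ht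
    refine ((k1.mul (hcos t)).sub ((k2.mul (hsin t)).const_mul (3 / 2))).congr_deriv ?_
    ring
  have hC : ∀ t ∈ Set.Icc 0 (Real.pi / 4), HasDerivAt
      (fun t => u t * Real.sin (2 / 3 * t) + 3 / 2 * (v t * Real.cos (2 / 3 * t))) 0 t := by
    intro t ht
    obtain ⟨k1, k2⟩ := key t ht
    refine ((k1.mul (hsin t)).add ((k2.mul (hcos t)).const_mul (3 / 2))).congr_deriv ?_
    ring
  have hm : Real.pi / 4 ∈ Set.Icc 0 (Real.pi / 4) := ⟨by positivity, le_rfl⟩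
  have B1 := constant_of_has_deriv_right_zero
    (fun t ht => (hB t ht).continuousAt.continuousWithinAt)
    (fun t ht => (hB t ⟨ht.1, ht.2.le⟩).hasDerivWithinAt) _ hm
  have C1 := constant_of_has_deriv_right_zero
    (fun t ht => (hC t ht).continuousAt.continuousWithinAt)
    (fun t ht => (hC t ⟨ht.1, ht.2.le⟩).hasDerivWithinAt) _ hm
  have hP0 : auxP 0 = 1 := by
    unfold auxP
    rw [tsum_eq_single 0 (fun n hn => by simp [hn])]
    simp [auxA_zero]
  have u0 : u 0 = 1 := by simp [hu, hP0]
  have v0 : v 0 = 0 := by simp [hv]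
  have ang : 2 / 3 * (Real.pi / 4) = Real.pi / 6 := by ring
  simp only [u0, v0, ang, mul_zero, Real.cos_zero, Real.sin_zero, Real.cos_pi_div_six,
    Real.sin_pi_div_six] at B1 C1
  have s3 : Real.sqrt 3 ^ 2 = 3 := Real.sq_sqrt (by norm_num)
  have s2 : Real.sqrt 2 ^ 2 = 2 := Real.sq_sqrt (by norm_num)
  have hu4 : u (Real.pi / 4) = Real.sqrt 3 / 2 := by
    linear_combination (Real.sqrt 3 / 2) * B1 + 1 / 2 * C1 - (u (Real.pi / 4)) / 4 * s3
  simp only [hu, Real.sin_pi_div_four, Real.cos_pi_div_four, div_pow, s2] at hu4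
  norm_num at hu4
  have : auxP (1 / 2) = Real.sqrt 3 * Real.sqrt 2 / 2 := by
    linear_combination Real.sqrt 2 * hu4 - auxP (1 / 2) / 2 * s2
  rw [this]
  symm
  rw [Real.sqrt_eq_iff_mul_self_eq (by norm_num) (by positivity)]
  linear_combination -(Real.sqrt 2 ^ 2 / 4) * s3 - 3 / 4 * s2

theorem stmt16 :
    HasSum
      (fun r : ℕ =>
        (3 : ℝ)⁻¹ ^ r * cubicE r * 4 ^ r * (r.factorial : ℝ) / ((2 * r).factorial : ℝ))
      (Real.sqrt (3 / 2)) ∧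
    HasSum
      (fun r : ℕ =>
        (Polynomial.eval (1 / 6 : ℝ) (ascPochhammer ℝ r) *
            Polynomial.eval (5 / 6 : ℝ) (ascPochhammer ℝ r) /
            Polynomial.eval (1 / 2 : ℝ) (ascPochhammer ℝ r)) *
          (1 / 2 : ℝ) ^ r / (r.factorial : ℝ))
      (Real.sqrt (3 / 2)) := by
  have h : HasSum (fun r : ℕ => auxA r * (1 / 2) ^ r) (Real.sqrt (3 / 2)) := by
    rw [← aux_val]
    exact (aux_deriv auxA
      (fun n => by rw [abs_of_nonneg (auxA_bd n).1]; exact (auxA_bd n).2) (1 / 2)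
      (by rw [abs_of_pos] <;> norm_num)).1.hasSum
  refine ⟨?_, ?_⟩
  · simpa only [cubic_term] using h
  · convert h using 2 with r
    unfold auxA
    ring
end

section
/- For every real x, the double series identity ∑_{r≥0} 3^{−r} · e_r · F_r(x) = √(3/(2π)) · exp(4x³/27) holds, where F_r(x) := ∑_{k≥0} (x^k/k!) · (1/Γ(1/2 + r − 2k/3)) and e_r := (6r)!/( (3!)^{2r} · 2^{3r} · (3r)! · (2r)! ); all the series involved converge absolutely. -/
/-- `F_r(x) = ∑_{k≥0} (x^k/k!) / Γ(1/2 + r − 2k/3)`. -/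
noncomputable def Ffun (r : ℕ) (x : ℝ) : ℝ :=
  ∑' k : ℕ, x ^ k / k.factorial * (1 / Real.Gamma (1 / 2 + r - 2 * k / 3))

noncomputable def hG (s : ℝ) : ℝ := (Real.Gamma s)⁻¹

lemma hG_rec (s : ℝ) : hG s = s * hG (s + 1) := by
  unfold hG
  by_cases hs : s = 0
  · subst hs; simp [Real.Gamma_zero]
  · rw [Real.Gamma_add_one hs, mul_inv, ← mul_assoc, mul_inv_cancel₀ hs, one_mul]

noncomputable def pP (r : ℕ) : ℝ := (3 : ℝ)⁻¹ ^ r * cubicE r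

lemma pP_zero : pP 0 = 1 := by simp [pP, cubicE]

lemma pP_succ (r : ℕ) :
    pP (r + 1) = pP r * ((1 / 2) * (r + 1 / 6) * (r + 5 / 6) / (r + 1)) := by
  unfold pP cubicE
  have e6 : 6 * (r + 1) = 6 * r + 5 + 1 := by ring
  have e3 : 3 * (r + 1) = 3 * r + 2 + 1 := by ring
  have e2 : 2 * (r + 1) = 2 * r + 1 + 1 := by ring
  rw [e6, e3, e2]
  simp only [Nat.factorial_succ, pow_succ, Nat.factorial]
  have h6 : ((6 * r).factorial : ℝ) ≠ 0 := by positivity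
  have h3 : ((3 * r).factorial : ℝ) ≠ 0 := by positivity
  have h2 : ((2 * r).factorial : ℝ) ≠ 0 := by positivity
  push_cast
  field_simp
  ring

lemma pP_pos (r : ℕ) : 0 < pP r := by
  unfold pP cubicE; positivity

lemma pP_le (r : ℕ) : pP r ≤ r.factorial * (1 / 2) ^ r := by
  induction r with
  | zero => simp [pP_zero]
  | succ r ih =>
    rw [pP_succ, Nat.factorial_succ, pow_succ]
    have h1 : (1 / 2) * ((r : ℝ) + 1 / 6) * (r + 5 / 6) / (r + 1) ≤ (r + 1) * (1 / 2) := by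
      rw [div_le_iff₀ (by positivity)]
      have : (0 : ℝ) ≤ r := by positivity
      nlinarith
    calc _ ≤ (r.factorial * (1 / 2) ^ r : ℝ) * ((r + 1) * (1 / 2)) := by
          apply mul_le_mul ih h1 (by positivity) (by positivity)
      _ = _ := by push_cast; ring

lemma geo_bound (v : ℕ → ℝ) (hv : ∀ n, 0 ≤ v n) (N0 : ℕ)
    (h : ∀ n, N0 ≤ n → v (n + 1) ≤ 6 / 5 * v n) :
    ∃ A : ℝ, 0 ≤ A ∧ ∀ n, v n ≤ A * (6 / 5) ^ n := by
  refine ⟨∑ i ∈ Finset.range (N0 + 1), v i, Finset.sum_nonneg fun i _ => hv i, ?_⟩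
  have key : ∀ i ≤ N0, v i ≤ ∑ i ∈ Finset.range (N0 + 1), v i := fun i hi =>
    Finset.single_le_sum (f := v) (fun i _ => hv i) (Finset.mem_range.2 (by omega))
  have h0 : 0 ≤ ∑ i ∈ Finset.range (N0 + 1), v i := Finset.sum_nonneg fun i _ => hv i
  intro n
  induction n with
  | zero => simpa using key 0 (by omega)
  | succ n ih =>
    by_cases hn : N0 ≤ n
    · have := h n hn
      rw [pow_succ]; linarith
    · have := key (n + 1) (by omega)
      have h1 : (1 : ℝ) ≤ (6 / 5) ^ (n + 1) := one_le_pow₀ (by norm_num)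
      nlinarith

lemma hG_up (s : ℝ) : ∃ A : ℝ, 0 ≤ A ∧ ∀ n : ℕ, n.factorial * |hG (s + n)| ≤ A * (6 / 5) ^ n := by
  obtain ⟨N0, hN0⟩ := exists_nat_ge (|s| * 6 + 5)
  refine geo_bound (fun n => n.factorial * |hG (s + n)|) (fun n => by positivity) N0 ?_
  intro n hn
  have hn' : (N0 : ℝ) ≤ n := by exact_mod_cast hn
  have hs := neg_abs_le s
  have hs2 := abs_nonneg s
  have hpos : 0 < s + n := by linarith
  have e : |hG (s + n)| = (s + n) * |hG (s + (n + 1 : ℕ))| := by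
    rw [hG_rec (s + n), abs_mul, abs_of_pos hpos]; push_cast; rw [add_assoc]
  rw [e, Nat.factorial_succ]
  push_cast
  have : ((n : ℝ) + 1) ≤ 6 / 5 * (s + n) := by linarith
  have h2 : 0 ≤ (n.factorial : ℝ) * |hG (s + (n + 1))| := by positivity
  nlinarith

lemma hG_down (s : ℝ) (hs : |s| ≤ 1) :
    ∃ A : ℝ, 0 ≤ A ∧ ∀ n : ℕ, |hG (s - n)| / n.factorial ≤ A * (6 / 5) ^ n := by
  refine geo_bound (fun n => |hG (s - n)| / n.factorial) (fun n => by positivity) 4 ?_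
  intro n hn
  have hn' : (4 : ℝ) ≤ n := by exact_mod_cast hn
  have e : |hG (s - (n + 1 : ℕ))| = |s - (n + 1)| * |hG (s - n)| := by
    rw [hG_rec, abs_mul]; push_cast; congr 3; ring
  have h1 : |s - (n + 1)| ≤ n + 2 := by
    rw [abs_le] at *; constructor <;> linarith [hs.1, hs.2]
  rw [e, Nat.factorial_succ]
  push_cast
  rw [div_le_iff₀ (by positivity)]
  have : 6 / 5 * (|hG (s - n)| / n.factorial) * ((n + 1) * n.factorial) =
    (6 / 5 * (n + 1)) * |hG (s - n)| := by field_simp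
  rw [this]
  apply mul_le_mul_of_nonneg_right _ (abs_nonneg _)
  linarith

lemma hG_two (s : ℝ) (hs : |s| ≤ 1) :
    ∃ A : ℝ, 0 ≤ A ∧ ∀ r n : ℕ,
      r.factorial * |hG (s + r - n)| ≤ A * ((3 / 2) ^ r * (n.factorial * 5 ^ n)) := by
  obtain ⟨A, hA, h1⟩ := hG_up s
  obtain ⟨B, hB, h2⟩ := hG_down s hs
  refine ⟨A + B, by positivity, ?_⟩
  intro r n
  rcases le_total n r with h | h
  · obtain ⟨N, rfl⟩ := Nat.exists_eq_add_of_le h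
    have e : s + ((n + N : ℕ) : ℝ) - n = s + N := by push_cast; ring
    rw [e]
    have hb : ((n + N).choose n : ℝ) ≤ (5 / 4) ^ (n + N) * 4 ^ n := by
      have := Finset.single_le_sum (f := fun m => (1 / 4 : ℝ) ^ m * 1 ^ (n + N - m) * (n + N).choose m)
        (s := Finset.range (n + N + 1)) (fun i _ => by positivity)
        (Finset.mem_range.2 (show n < n + N + 1 by omega))
      rw [← add_pow] at this
      simp only [one_pow, mul_one] at this
      have h3 : (1 / 4 + 1 : ℝ) = 5 / 4 := by norm_num
      rw [h3] at this
      have h4 : ((n + N).choose n : ℝ) = ((1 / 4) ^ n * (n + N).choose n) * 4 ^ n := by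
        rw [mul_comm ((1 / 4 : ℝ) ^ n), mul_assoc, ← mul_pow]; norm_num
      rw [h4]
      exact mul_le_mul_of_nonneg_right this (by positivity)
    have hf : ((n + N).factorial : ℝ) = (n + N).choose n * n.factorial * N.factorial := by
      have := Nat.choose_mul_factorial_mul_factorial (show n ≤ n + N by omega)
      rw [Nat.add_sub_cancel_left] at this
      exact_mod_cast this.symm
    calc ((n + N).factorial : ℝ) * |hG (s + N)|
        = ((n + N).choose n * n.factorial) * (N.factorial * |hG (s + N)|) := by rw [hf]; ring
      _ ≤ (((5 / 4) ^ (n + N) * 4 ^ n) * n.factorial) * (A * (6 / 5) ^ N) := by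
          apply mul_le_mul _ (h1 N) (by positivity) (by positivity)
          exact mul_le_mul_of_nonneg_right hb (by positivity)
      _ ≤ (((5 / 4) ^ (n + N) * 5 ^ n) * n.factorial) * ((A + B) * (6 / 5) ^ (n + N)) := by
          gcongr
          · norm_num
          · linarith
          · norm_num
          · omega
      _ = _ := by
          have : (3 / 2 : ℝ) ^ (n + N) = (5 / 4) ^ (n + N) * (6 / 5) ^ (n + N) := by
            rw [← mul_pow]; norm_num
          rw [this]; ring
  · obtain ⟨N, rfl⟩ := Nat.exists_eq_add_of_le h
    have e : s + (r : ℝ) - (r + N : ℕ) = s - N := by push_cast; ring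
    rw [e]
    have h3 := h2 N
    rw [div_le_iff₀ (by positivity)] at h3
    have hf : (r.factorial : ℝ) * N.factorial ≤ (r + N).factorial := by
      exact_mod_cast Nat.le_of_dvd (Nat.factorial_pos _) (Nat.factorial_mul_factorial_dvd_factorial_add r N)
    calc (r.factorial : ℝ) * |hG (s - N)| ≤ r.factorial * (B * (6 / 5) ^ N * N.factorial) := by gcongr
      _ = (B * (6 / 5) ^ N) * (r.factorial * N.factorial) := by ring
      _ ≤ ((A + B) * 5 ^ (r + N)) * (r + N).factorial := by
          gcongr
          · linarith
          · calc (6 / 5 : ℝ) ^ N ≤ 5 ^ N := by gcongr; norm_num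
              _ ≤ 5 ^ (r + N) := by gcongr; norm_num; omega
      _ ≤ ((A + B) * 5 ^ (r + N)) * (r + N).factorial * (3 / 2) ^ r := by
          apply le_mul_of_one_le_right (by positivity) (one_le_pow₀ (by norm_num))
      _ = _ := by ring

noncomputable def GG (c : ℝ) : ℝ := ∑' r : ℕ, pP r * hG (c + r)

lemma term_bound (c : ℝ) : ∃ A : ℝ, 0 ≤ A ∧ ∀ r : ℕ, |pP r * hG (c + r)| ≤ A * (3 / 5) ^ r := by
  obtain ⟨A, hA, h⟩ := hG_up c
  refine ⟨A, hA, fun r => ?_⟩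
  rw [abs_mul, abs_of_pos (pP_pos r)]
  calc pP r * |hG (c + r)| ≤ (r.factorial * (1 / 2) ^ r) * |hG (c + r)| := by
        gcongr; exact pP_le r
    _ = (1 / 2) ^ r * (r.factorial * |hG (c + r)|) := by ring
    _ ≤ (1 / 2) ^ r * (A * (6 / 5) ^ r) := mul_le_mul_of_nonneg_left (h r) (by positivity)
    _ = A * (3 / 5) ^ r := by
      have : (3 / 5 : ℝ) ^ r = (1 / 2) ^ r * (6 / 5) ^ r := by rw [← mul_pow]; norm_num
      rw [this]; ring

lemma GG_summable (c : ℝ) : Summable fun r : ℕ => pP r * hG (c + r) := by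
  obtain ⟨A, hA, h⟩ := term_bound c
  exact Summable.of_norm_bounded
    ((summable_geometric_of_lt_one (by norm_num) (by norm_num)).mul_left A) h

lemma GG_rec (c : ℝ) : (c + 1 / 6) * (c + 5 / 6) * GG (c + 2) = GG c := by
  have hs : Summable fun r : ℕ => (c + 1 / 6) * (c + 5 / 6) * (pP r * hG (c + 2 + r)) -
      pP r * hG (c + r) := ((GG_summable (c + 2)).mul_left _).sub (GG_summable c)
  have hpart : ∀ n : ℕ, ∑ r ∈ Finset.range n, ((c + 1 / 6) * (c + 5 / 6) * (pP r * hG (c + 2 + r)) -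
      pP r * hG (c + r)) = 2 * n * (pP n * hG (c + 1 + n)) := by
    intro n
    induction n with
    | zero => simp
    | succ n ih =>
      rw [Finset.sum_range_succ, ih, pP_succ]
      have e1 : hG (c + n) = (c + n) * ((c + n + 1) * hG (c + 2 + n)) := by
        rw [hG_rec, hG_rec (c + n + 1)]; rw [show c + (n : ℝ) + 1 + 1 = c + 2 + n by ring]
      have e2 : hG (c + 1 + n) = (c + n + 1) * hG (c + 2 + n) := by
        rw [hG_rec, show c + 1 + (n : ℝ) + 1 = c + 2 + n by ring]; ring
      have e3 : hG (c + 1 + (n + 1 : ℕ)) = hG (c + 2 + n) := by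
        congr 1; push_cast; ring
      rw [e1, e2, e3]
      push_cast
      field_simp
      ring
  have hU : Filter.Tendsto (fun n : ℕ => 2 * n * (pP n * hG (c + 1 + n))) Filter.atTop (nhds 0) := by
    obtain ⟨A, hA, h⟩ := term_bound (c + 1)
    have h0 := (tendsto_self_mul_const_pow_of_lt_one (r := (3 / 5 : ℝ)) (by norm_num) (by norm_num)).const_mul (2 * A)
    rw [mul_zero] at h0
    refine squeeze_zero_norm (fun n => ?_) h0
    rw [Real.norm_eq_abs, abs_mul, abs_of_nonneg (by positivity : (0 : ℝ) ≤ 2 * n)]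
    calc _ ≤ 2 * (n : ℝ) * (A * (3 / 5) ^ n) := by gcongr; exact h n
      _ = _ := by ring
  have h1 := hs.hasSum.tendsto_sum_nat
  simp_rw [hpart] at h1
  have h2 := tendsto_nhds_unique h1 hU
  rw [((GG_summable (c + 2)).mul_left _).tsum_sub (GG_summable c), tsum_mul_left] at h2
  unfold GG
  linarith

noncomputable def QQ (n : ℕ) : ℝ := 4 ^ n * (3 * n).factorial / (27 ^ n * n.factorial)

lemma QQ_succ (n : ℕ) : QQ (n + 1) = QQ n * ((2 * n + 2 / 3) * (2 * n + 4 / 3)) := by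
  unfold QQ
  have e3 : 3 * (n + 1) = 3 * n + 2 + 1 := by ring
  rw [e3]
  simp only [Nat.factorial_succ, pow_succ]
  push_cast
  field_simp
  ring

lemma GG_up (n : ℕ) : GG (1 / 2) = QQ n * GG (1 / 2 + 2 * n) := by
  induction n with
  | zero => simp [QQ]
  | succ n ih =>
    rw [ih, ← GG_rec, QQ_succ]
    push_cast
    ring_nf

lemma GG_down (n : ℕ) : GG (1 / 2 - 2 * n) = QQ n * GG (1 / 2) := by
  induction n with
  | zero => simp [QQ]
  | succ n ih =>
    rw [← GG_rec, QQ_succ]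
    have : (1 / 2 - 2 * ((n + 1 : ℕ) : ℝ) + 2) = 1 / 2 - 2 * n := by push_cast; ring
    rw [this, ih]
    push_cast
    ring

lemma GG_one (n : ℕ) : GG (-1 / 6 - 2 * n) = 0 := by
  induction n with
  | zero => rw [← GG_rec]; norm_num
  | succ n ih =>
    rw [← GG_rec]
    have : (-1 / 6 - 2 * ((n + 1 : ℕ) : ℝ) + 2) = -1 / 6 - 2 * n := by push_cast; ring
    rw [this, ih, mul_zero]

lemma GG_two (n : ℕ) : GG (-5 / 6 - 2 * n) = 0 := by
  induction n with
  | zero => rw [← GG_rec]; norm_num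
  | succ n ih =>
    rw [← GG_rec]
    have : (-5 / 6 - 2 * ((n + 1 : ℕ) : ℝ) + 2) = -5 / 6 - 2 * n := by push_cast; ring
    rw [this, ih, mul_zero]

lemma Gamma_half (n : ℕ) : Real.Gamma (1 / 2 + 2 * n) =
    (4 * n).factorial * √Real.pi / (16 ^ n * (2 * n).factorial) := by
  induction n with
  | zero => simp [Real.Gamma_one_half_eq, -one_div]
  | succ n ih =>
    have e : (1 / 2 + 2 * ((n + 1 : ℕ) : ℝ)) = (1 / 2 + 2 * n + 1) + 1 := by push_cast; ring
    rw [e, Real.Gamma_add_one (by positivity), Real.Gamma_add_one (by positivity), ih]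
    have e4 : 4 * (n + 1) = 4 * n + 3 + 1 := by ring
    have e2 : 2 * (n + 1) = 2 * n + 1 + 1 := by ring
    rw [e4, e2]
    simp only [Nat.factorial_succ, pow_succ]
    push_cast
    field_simp
    ring

lemma ratio_lim : Filter.Tendsto (fun n : ℕ => QQ n / Real.Gamma (1 / 2 + 2 * n)) Filter.atTop
    (nhds √(3 / (2 * Real.pi))) := by
  have hS := Stirling.tendsto_stirlingSeq_sqrt_pi
  have hm : ∀ k : ℕ, 0 < k → Filter.Tendsto (fun n : ℕ => Stirling.stirlingSeq (k * n)) Filter.atTop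
      (nhds √Real.pi) := fun k hk =>
    hS.comp (Filter.tendsto_id.const_mul_atTop' hk)
  have hpi : √Real.pi ≠ 0 := by positivity
  have hlim := (((hm 3 (by norm_num)).mul (hm 2 (by norm_num))).div
    ((hS.mul (hm 4 (by norm_num))).mul_const (√Real.pi)) (by positivity)).mul_const √(3 / 2)
  have e : √Real.pi * √Real.pi / (√Real.pi * √Real.pi * √Real.pi) * √(3 / 2) = √(3 / (2 * Real.pi)) := by
    rw [← div_div 3 2 Real.pi, Real.sqrt_div (by norm_num : (0:ℝ) ≤ 3 / 2)]
    field_simp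
  rw [e] at hlim
  refine hlim.congr' ?_
  filter_upwards [Filter.eventually_gt_atTop 0] with n hn
  simp only [Pi.div_apply]
  have hn' : (0 : ℝ) < n := by exact_mod_cast hn
  have hst : ∀ k : ℕ, 0 < k → ((k * n).factorial : ℝ) = Stirling.stirlingSeq (k * n) *
      (√(2 * n) * √k * ((k : ℝ) ^ n * (n / Real.exp 1) ^ n) ^ k) := by
    intro k hk
    have hk' : (0 : ℝ) < k := by exact_mod_cast hk
    unfold Stirling.stirlingSeq
    have e1 : √(2 * ((k * n : ℕ) : ℝ)) = √(2 * n) * √k := by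
      rw [← Real.sqrt_mul (by positivity)]; push_cast; ring_nf
    have e2 : (((k * n : ℕ) : ℝ) / Real.exp 1) ^ (k * n) = ((k : ℝ) ^ n * (n / Real.exp 1) ^ n) ^ k := by
      rw [← mul_pow, ← pow_mul, mul_comm n k]; push_cast; ring
    rw [e1, e2]
    field_simp
  have h1 := hst 1 (by norm_num)
  have h2 := hst 2 (by norm_num)
  have h3 := hst 3 (by norm_num)
  have h4 := hst 4 (by norm_num)
  rw [one_mul] at h1
  rw [Gamma_half]
  unfold QQ
  rw [h1, h2, h3, h4]
  have p1 : ∀ k : ℕ, 0 < k → 0 < Stirling.stirlingSeq (k * n) := by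
    intro k hk
    have hk' : (0 : ℝ) < k := by exact_mod_cast hk
    unfold Stirling.stirlingSeq
    push_cast
    positivity
  have q1 := p1 1 (by norm_num)
  have q2 := p1 2 (by norm_num)
  have q3 := p1 3 (by norm_num)
  have q4 := p1 4 (by norm_num)
  rw [one_mul] at q1
  have hsq : √(3 / 2 : ℝ) = √3 * √2 / 2 := by
    rw [Real.sqrt_div (by norm_num)]
    have := Real.mul_self_sqrt (show (0:ℝ) ≤ 2 by norm_num)
    field_simp
    nlinarith
  have h44 : √(4 : ℝ) = 2 := by
    rw [show (4 : ℝ) = 2 ^ 2 by norm_num]; exact Real.sqrt_sq (by norm_num)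
  push_cast
  rw [hsq, h44]
  set X := (n / Real.exp 1) ^ n with hX
  have hXp : 0 < X := by positivity
  have a4 : (4 : ℝ) ^ n = (2 ^ n) ^ 2 := by rw [← pow_mul, mul_comm, pow_mul]; norm_num
  have a16 : (16 : ℝ) ^ n = (2 ^ n) ^ 4 := by rw [← pow_mul, mul_comm, pow_mul]; norm_num
  have a27 : (27 : ℝ) ^ n = (3 ^ n) ^ 3 := by rw [← pow_mul, mul_comm, pow_mul]; norm_num
  rw [a4, a16, a27, Real.sqrt_one, one_pow]
  have : 0 < √(2 * (n : ℝ)) := by positivity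
  field_simp

lemma fac_hG (c : ℝ) (hc : 1 ≤ c) (r : ℕ) :
    (r + 1).factorial * hG (c + (r + 1 : ℕ)) * Real.Gamma c ≤ 1 / c := by
  have hG0 : 0 < Real.Gamma c := Real.Gamma_pos_of_pos (by linarith)
  induction r with
  | zero =>
    have : hG (c + (0 + 1 : ℕ)) = 1 / c * (Real.Gamma c)⁻¹ := by
      unfold hG
      push_cast
      rw [Real.Gamma_add_one (by linarith), mul_inv, one_div]
    rw [this]
    simp
    rw [mul_assoc, inv_mul_cancel₀ hG0.ne', mul_one]
  | succ r ih =>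
    have hp : 0 < c + (r + 1 : ℕ) := by positivity
    have e := hG_rec (c + (r + 1 : ℕ))
    have e1 : c + ((r + 1 : ℕ) : ℝ) + 1 = c + (r + 1 + 1 : ℕ) := by push_cast; ring
    rw [e1] at e
    rw [e] at ih
    refine le_trans ?_ ih
    apply mul_le_mul_of_nonneg_right _ hG0.le
    have h0 : 0 ≤ hG (c + (r + 1 + 1 : ℕ)) := by
      unfold hG
      exact inv_nonneg.2 (Real.Gamma_pos_of_pos (by positivity)).le
    rw [Nat.factorial_succ (r + 1), ← mul_assoc]
    apply mul_le_mul_of_nonneg_right _ h0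
    rw [mul_comm]
    rw [Nat.cast_mul]
    apply mul_le_mul_of_nonneg_left _ (by positivity)
    push_cast
    linarith

lemma GG_Gamma_bound (c : ℝ) (hc : 1 ≤ c) : |GG c * Real.Gamma c - 1| ≤ 1 / c := by
  have hG0 : 0 < Real.Gamma c := Real.Gamma_pos_of_pos (by linarith)
  have hs := (GG_summable c).mul_right (Real.Gamma c)
  have e : GG c * Real.Gamma c - 1 =
      ∑' r : ℕ, pP (r + 1) * hG (c + (r + 1 : ℕ)) * Real.Gamma c := by
    unfold GG
    rw [← tsum_mul_right, hs.tsum_eq_zero_add]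
    have : pP 0 * hG (c + (0 : ℕ)) * Real.Gamma c = 1 := by
      rw [pP_zero]; simp [hG, hG0.ne']
    rw [this]; ring
  rw [e]
  have hg : HasSum (fun r : ℕ => 1 / c * (1 / 2 / 2 ^ r : ℝ)) (1 / c * 1) :=
    (hasSum_geometric_two' 1).mul_left _
  rw [mul_one] at hg
  rw [← Real.norm_eq_abs]
  refine tsum_of_norm_bounded hg fun r => ?_
  have h0 : 0 ≤ hG (c + (r + 1 : ℕ)) := by
    unfold hG
    exact inv_nonneg.2 (Real.Gamma_pos_of_pos (by positivity)).le
  have hp := pP_pos (r + 1)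
  rw [Real.norm_of_nonneg (by positivity)]
  calc _ = pP (r + 1) * (hG (c + (r + 1 : ℕ)) * Real.Gamma c) := by ring
    _ ≤ ((r + 1).factorial * (1 / 2) ^ (r + 1)) * (hG (c + (r + 1 : ℕ)) * Real.Gamma c) :=
        mul_le_mul_of_nonneg_right (pP_le _) (by positivity)
    _ = ((r + 1).factorial * hG (c + (r + 1 : ℕ)) * Real.Gamma c) * (1 / 2) ^ (r + 1) := by ring
    _ ≤ 1 / c * (1 / 2) ^ (r + 1) := mul_le_mul_of_nonneg_right (fac_hG c hc r) (by positivity)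
    _ = _ := by rw [pow_succ, one_div_pow]; ring

lemma GG_half : GG (1 / 2) = √(3 / (2 * Real.pi)) := by
  have h1 : Filter.Tendsto (fun n : ℕ => GG (1 / 2 + 2 * n) * Real.Gamma (1 / 2 + 2 * n) - 1)
      Filter.atTop (nhds 0) := by
    refine squeeze_zero_norm' (a := fun n : ℕ => 1 / (n : ℝ)) ?_ tendsto_one_div_atTop_nhds_zero_nat
    filter_upwards [Filter.eventually_gt_atTop 0] with n hn
    have hn' : (1 : ℝ) ≤ n := by exact_mod_cast hn
    refine (GG_Gamma_bound _ (by linarith)).trans ?_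
    apply one_div_le_one_div_of_le <;> linarith
  have h2 := ratio_lim.mul (h1.add_const 1)
  rw [zero_add, mul_one] at h2
  refine tendsto_nhds_unique (tendsto_const_nhds.congr fun n => ?_) h2
  have hG0 : Real.Gamma (1 / 2 + 2 * n) ≠ 0 := (Real.Gamma_pos_of_pos (by positivity)).ne'
  rw [GG_up n]
  field_simp
  ring

lemma summable_three (f : ℕ → ℝ) (h : ∀ j : Fin 3, Summable fun m : ℕ => f (3 * m + j)) :
    Summable f := by
  have hs := h
  have key : Summable (fun p : Fin 3 × ℕ => |f (3 * p.2 + p.1)|) := by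
    rw [summable_prod_of_nonneg (fun p => abs_nonneg _)]
    exact ⟨fun j => (h j).abs, Summable.of_finite⟩
  have key2 : Summable (fun p : Fin 3 × ℕ => f (3 * p.2 + p.1)) := key.of_abs
  have e := ((Nat.divModEquiv 3).trans (Equiv.prodComm _ _)).summable_iff.2 key2
  refine e.congr fun k => ?_
  simp [Nat.div_add_mod]

lemma main_bound (x : ℝ) : ∃ B : ℕ → ℝ, Summable B ∧ ∀ r k : ℕ,
    |pP r * (x ^ k / k.factorial * hG (1 / 2 + r - 2 * k / 3))| ≤ B k * (3 / 4) ^ r := by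
  have h : ∀ j : Fin 3, ∃ A : ℝ, 0 ≤ A ∧ ∀ r n : ℕ,
      r.factorial * |hG (1 / 2 - 2 * (j : ℕ) / 3 + r - n)| ≤
        A * ((3 / 2) ^ r * (n.factorial * 5 ^ n)) := by
    intro j
    apply hG_two
    fin_cases j <;> norm_num [abs_le]
  choose A hA hb using h
  have hlt : ∀ k, k % 3 < 3 := fun k => Nat.mod_lt _ (by norm_num)
  refine ⟨fun k => A ⟨k % 3, hlt k⟩ *
    (|x| ^ k / k.factorial * ((2 * (k / 3)).factorial * 5 ^ (2 * (k / 3)))), ?_, ?_⟩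
  · apply summable_three
    intro j
    have e1 : ∀ m : ℕ, (3 * m + (j : ℕ)) / 3 = m := by intro m; have := j.2; omega
    have e2 : ∀ m : ℕ, (3 * m + (j : ℕ)) % 3 = j := by intro m; have := j.2; omega
    simp only [e1, e2]
    refine Summable.mul_left (A j) (f := fun m : ℕ => |x| ^ (3 * m + (j : ℕ)) /
      (3 * m + (j : ℕ)).factorial * ((2 * m).factorial * 5 ^ (2 * m))) ?_
    refine Summable.of_nonneg_of_le (fun m => by positivity) (fun m => ?_)
      ((Real.summable_pow_div_factorial (25 * |x| ^ 3)).mul_left (|x| ^ (j : ℕ)))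
    have hf : ((m.factorial : ℝ) * (2 * m).factorial) ≤ (3 * m + (j : ℕ)).factorial := by
      have h1 := Nat.le_of_dvd (Nat.factorial_pos _)
        (Nat.factorial_mul_factorial_dvd_factorial_add m (2 * m))
      have h2 := Nat.factorial_le (show m + 2 * m ≤ 3 * m + (j : ℕ) by omega)
      exact_mod_cast h1.trans h2
    calc _ ≤ |x| ^ (3 * m + (j : ℕ)) / (m.factorial * (2 * m).factorial) *
          ((2 * m).factorial * 5 ^ (2 * m)) := by gcongr
      _ = _ := by
        rw [pow_add, pow_mul, pow_mul, mul_pow]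
        norm_num
        field_simp
  · intro r k
    have hk : k = 3 * (k / 3) + k % 3 := (Nat.div_add_mod k 3).symm
    have hk' : (k : ℝ) = 3 * ((k / 3 : ℕ) : ℝ) + ((k % 3 : ℕ) : ℝ) := by exact_mod_cast hk
    have ha := hb ⟨k % 3, hlt k⟩ r (2 * (k / 3))
    have e : (1 / 2 : ℝ) - 2 * ((k % 3 : ℕ) : ℝ) / 3 + r - (2 * (k / 3) : ℕ) =
        1 / 2 + r - 2 * k / 3 := by rw [hk']; push_cast; ring
    simp only [e] at ha
    have hp := pP_pos r
    rw [abs_mul, abs_mul, abs_div, abs_pow, abs_of_pos hp, Nat.abs_cast]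
    calc _ ≤ (r.factorial * (1 / 2) ^ r) * (|x| ^ k / k.factorial * |hG (1 / 2 + r - 2 * k / 3)|) :=
          mul_le_mul_of_nonneg_right (pP_le r) (by positivity)
      _ = ((1 / 2) ^ r * (|x| ^ k / k.factorial)) *
          (r.factorial * |hG (1 / 2 + r - 2 * k / 3)|) := by ring
      _ ≤ ((1 / 2) ^ r * (|x| ^ k / k.factorial)) * _ :=
          mul_le_mul_of_nonneg_left ha (by positivity)
      _ = _ := by
        have : (3 / 4 : ℝ) ^ r = (1 / 2) ^ r * (3 / 2) ^ r := by rw [← mul_pow]; norm_num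
        rw [this]; ring

lemma sum_k (x : ℝ) : HasSum (fun k : ℕ => x ^ k / k.factorial * GG (1 / 2 - 2 * k / 3))
    (√(3 / (2 * Real.pi)) * Real.exp (4 * x ^ 3 / 27)) := by
  have hinj : Function.Injective (fun m : ℕ => 3 * m) := fun a b h => by
    simp only at h; omega
  rw [← hinj.hasSum_iff]
  · have h := (NormedSpace.expSeries_div_hasSum_exp (4 * x ^ 3 / 27)).mul_left √(3 / (2 * Real.pi))
    rw [← Real.exp_eq_exp_ℝ] at h
    refine h.congr_fun ?_
    intro m
    have e : (1 / 2 - 2 * ((3 * m : ℕ) : ℝ) / 3) = 1 / 2 - 2 * m := by push_cast; ring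
    simp only [Function.comp_apply]
    rw [e, GG_down, GG_half, QQ, div_pow, mul_pow, pow_mul]
    field_simp
  · intro k hk
    have h3 : k % 3 ≠ 0 := fun h => hk ⟨k / 3, by simp only; omega⟩
    have hk : k = 3 * (k / 3) + k % 3 := (Nat.div_add_mod k 3).symm
    have hlt := Nat.mod_lt k (show 3 > 0 by norm_num)
    rcases (show k % 3 = 1 ∨ k % 3 = 2 by omega) with h | h
    · rw [h] at hk
      have hk' : (k : ℝ) = 3 * ((k / 3 : ℕ) : ℝ) + 1 := by exact_mod_cast hk
      have e : (1 / 2 - 2 * (k : ℝ) / 3) = -1 / 6 - 2 * ((k / 3 : ℕ) : ℝ) := by rw [hk']; ring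
      rw [e, GG_one, mul_zero]
    · rw [h] at hk
      have hk' : (k : ℝ) = 3 * ((k / 3 : ℕ) : ℝ) + 2 := by exact_mod_cast hk
      have e : (1 / 2 - 2 * (k : ℝ) / 3) = -5 / 6 - 2 * ((k / 3 : ℕ) : ℝ) := by rw [hk']; ring
      rw [e, GG_two, mul_zero]

theorem stmt18 (x : ℝ) :
    (∀ r : ℕ,
      Summable fun k : ℕ => |x ^ k / k.factorial * (1 / Real.Gamma (1 / 2 + r - 2 * k / 3))|) ∧
    (Summable fun r : ℕ => |(3 : ℝ)⁻¹ ^ r * cubicE r * Ffun r x|) ∧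
    HasSum (fun r : ℕ => (3 : ℝ)⁻¹ ^ r * cubicE r * Ffun r x)
      (Real.sqrt (3 / (2 * Real.pi)) * Real.exp (4 * x ^ 3 / 27)) := by
  obtain ⟨B, hB, hb⟩ := main_bound x
  have hsum : Summable fun p : ℕ × ℕ =>
      pP p.1 * (x ^ p.2 / p.2.factorial * hG (1 / 2 + p.1 - 2 * p.2 / 3)) := by
    have hg : Summable fun r : ℕ => (3 / 4 : ℝ) ^ r :=
      summable_geometric_of_lt_one (by norm_num) (by norm_num)
    have hm : Summable fun p : ℕ × ℕ => (3 / 4 : ℝ) ^ p.1 * B p.2 :=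
      summable_mul_of_summable_norm hg.norm hB.norm
    refine Summable.of_norm_bounded hm fun p => ?_
    rw [mul_comm ((3 / 4 : ℝ) ^ p.1)]
    exact hb p.1 p.2
  have hF : ∀ r : ℕ, (3 : ℝ)⁻¹ ^ r * cubicE r * Ffun r x =
      ∑' k : ℕ, pP r * (x ^ k / k.factorial * hG (1 / 2 + r - 2 * k / 3)) := by
    intro r
    rw [tsum_mul_left]
    simp only [Ffun, pP, hG, one_div]
  have h3 : HasSum (fun r : ℕ => (3 : ℝ)⁻¹ ^ r * cubicE r * Ffun r x)
      (√(3 / (2 * Real.pi)) * Real.exp (4 * x ^ 3 / 27)) := by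
    have h1 := hsum.hasSum.prod_fiberwise (fun r => (hsum.prod_factor r).hasSum)
    have hsw : Summable fun p : ℕ × ℕ =>
      pP p.2 * (x ^ p.1 / p.1.factorial * hG (1 / 2 + p.2 - 2 * p.1 / 3)) := hsum.prod_symm
    have h2 := hsw.hasSum.prod_fiberwise (fun r => (hsw.prod_factor r).hasSum)
    have e : (∑' p : ℕ × ℕ, pP p.2 * (x ^ p.1 / p.1.factorial * hG (1 / 2 + p.2 - 2 * p.1 / 3))) =
        ∑' p : ℕ × ℕ, pP p.1 * (x ^ p.2 / p.2.factorial * hG (1 / 2 + p.1 - 2 * p.2 / 3)) :=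
      (Equiv.prodComm ℕ ℕ).tsum_eq (fun p : ℕ × ℕ =>
        pP p.1 * (x ^ p.2 / p.2.factorial * hG (1 / 2 + p.1 - 2 * p.2 / 3)))
    have e2 : (fun k : ℕ => ∑' r : ℕ, pP r * (x ^ k / k.factorial * hG (1 / 2 + r - 2 * k / 3))) =
        fun k : ℕ => x ^ k / k.factorial * GG (1 / 2 - 2 * k / 3) := by
      funext k
      unfold GG
      rw [← tsum_mul_left]
      refine tsum_congr fun r => ?_
      rw [show (1 / 2 + (r : ℝ) - 2 * k / 3) = 1 / 2 - 2 * k / 3 + r by ring]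
      ring
    simp only [e2] at h2
    rw [← e, h2.unique (sum_k x)] at h1
    simpa only [hF] using h1
  refine ⟨fun r => ?_, h3.summable.abs, h3⟩
  have h4 := (summable_mul_left_iff (pP_pos r).ne').1 (hsum.prod_factor r)
  simpa only [hG, one_div] using h4.abs
end
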